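/- Take F(x) = x, so ψ^ε(β) = 2 + ε(1/E(β) − 2). For every ε > 0 and every δ > 0 there exists β with 2 < β < 2 + δ such that ψ^ε(β) > β. -/

import Mathlib

/-- The orbit of `1` under the β-map `T_β(x) = βx mod 1`: `t₀ = 1`,
`t_{n+1} = β t_n − ⌊β t_n⌋`. -/
noncomputable def betaOrbit (β : ℝ) : ℕ → ℝ
  | 0 => 1
  | n + 1 => Int.fract (β * betaOrbit β n)

/-- `E(β) = (∑ t_n(β)²/(2βⁿ)) / (∑ t_n(β)/βⁿ)`, the expectation of the unique acim of
the β-map. -/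
noncomputable def Ebeta (β : ℝ) : ℝ :=
  (∑' n : ℕ, (betaOrbit β n) ^ 2 / (2 * β ^ n)) / (∑' n : ℕ, betaOrbit β n / β ^ n)

/-- `ψ^ε(β) = 2 + ε F(1/E(β) − 2)`. -/
noncomputable def psi (ε : ℝ) (F : ℝ → ℝ) (β : ℝ) : ℝ :=
  2 + ε * F (1 / Ebeta β - 2)

lemma betaOrbit_nonneg (β : ℝ) (n : ℕ) : 0 ≤ betaOrbit β n := by
  cases n with
  | zero => simp [betaOrbit]
  | succ n => simpa [betaOrbit] using Int.fract_nonneg _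

lemma betaOrbit_le_one (β : ℝ) (n : ℕ) : betaOrbit β n ≤ 1 := by
  cases n with
  | zero => simp [betaOrbit]
  | succ n => simpa [betaOrbit] using (Int.fract_lt_one _).le

lemma betaOrbit_small (η : ℝ) (h0 : 0 < η) (h1 : η ≤ 1) (N : ℕ) (hN : 3 ^ N * η ≤ 1 / 2)
    (n : ℕ) (hn : n ≤ N) : betaOrbit (2 + η) (n + 1) = (2 + η) ^ n * η ∧
      (2 + η) ^ n * η ≤ 1 / 2 := by
  have key : ∀ n ≤ N, (2 + η) ^ n * η ≤ 1 / 2 := by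
    intro n hn
    have a : (2 + η) ^ n ≤ (3 : ℝ) ^ n := by gcongr; linarith
    have b : (3 : ℝ) ^ n ≤ 3 ^ N := pow_le_pow_right₀ (by norm_num) hn
    nlinarith
  refine ⟨?_, key n hn⟩
  induction n with
  | zero =>
    have := key 0 hn
    simp only [betaOrbit, mul_one, pow_zero, one_mul] at *
    rw [Int.fract_eq_iff]
    exact ⟨h0.le, by linarith, 2, by push_cast; ring⟩
  | succ k ih =>
    have e := ih (by omega)
    have := key (k + 1) hn
    rw [betaOrbit, e, Int.fract_eq_iff]
    exact ⟨by positivity, by linarith, 0, by push_cast; ring⟩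

/-- For `F = id` and any `ε > 0`, arbitrarily close to `2` there are `β` with
`ψ^ε(β) > β`. -/
theorem stmt7 (ε : ℝ) (hε : 0 < ε) (δ : ℝ) (hδ : 0 < δ) :
    ∃ β : ℝ, 2 < β ∧ β < 2 + δ ∧ β < psi ε id β := by
  obtain ⟨N, hN⟩ := exists_nat_gt (6 / ε)
  obtain ⟨η, h0, h1, hd, hs⟩ : ∃ η : ℝ, 0 < η ∧ η ≤ 1 ∧ η < δ ∧ 3 ^ N * η ≤ 1 / 2 := by
    have p : (0 : ℝ) < 3 ^ N := by positivity
    refine ⟨min (min 1 (δ / 2)) (1 / 2 / 3 ^ N), by positivity, ?_, ?_, ?_⟩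
    · exact (min_le_left _ _).trans (min_le_left _ _)
    · have := (min_le_left (min 1 (δ / 2)) (1 / 2 / 3 ^ N)).trans (min_le_right _ _)
      linarith
    · have := min_le_right (min 1 (δ / 2)) (1 / 2 / 3 ^ N : ℝ)
      rw [le_div_iff₀ p] at this
      linarith
  refine ⟨2 + η, by linarith, by linarith, ?_⟩
  have hsm := betaOrbit_small η h0 h1 N hs
  generalize hβ : 2 + η = β at *
  have b2 : 2 < β := by linarith
  have bp : 0 < β := by linarith
  have t0 := betaOrbit_nonneg β
  have t1 := betaOrbit_le_one β
  have tz : betaOrbit β 0 = 1 := rfl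
  simp only [psi, Ebeta, id]
  generalize betaOrbit β = t at *
  have hg : Summable (fun n : ℕ => (1 / 2 : ℝ) ^ n) := summable_geometric_two
  have hle : ∀ n, 1 / β ^ n ≤ (1 / 2 : ℝ) ^ n := by
    intro n
    rw [one_div_pow]
    gcongr
  have hv0 : ∀ n, 0 ≤ t n ^ 2 / (2 * β ^ n) := fun n => by positivity
  have hu0 : ∀ n, 0 ≤ t n / β ^ n := fun n => div_nonneg (t0 n) (by positivity)
  have hu1 : ∀ n, t n / β ^ n ≤ (1 / 2 : ℝ) ^ n := fun n =>
    le_trans (by gcongr; exact t1 n) (hle n)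
  have hd0 : ∀ n, t n / β ^ n - 2 * (t n ^ 2 / (2 * β ^ n)) = t n * (1 - t n) / β ^ n := by
    intro n
    field_simp
  have hdn : ∀ n, 0 ≤ t n * (1 - t n) / β ^ n := fun n =>
    div_nonneg (mul_nonneg (t0 n) (by linarith [t1 n])) (by positivity)
  have hu : Summable fun n => t n / β ^ n := Summable.of_nonneg_of_le hu0 hu1 hg
  have hv : Summable fun n => t n ^ 2 / (2 * β ^ n) :=
    Summable.of_nonneg_of_le hv0 (fun n => by linarith [hd0 n, hdn n, hv0 n]) hu
  have hD2 : ∑' n, t n / β ^ n ≤ 2 := by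
    rw [← tsum_geometric_two]
    exact hu.tsum_le_tsum hu1 hg
  have hS : 1 / 2 ≤ ∑' n, t n ^ 2 / (2 * β ^ n) := by
    have := hv.le_tsum 0 (fun n _ => hv0 n)
    simpa [tz] using this
  have hsd : Summable fun n => t n * (1 - t n) / β ^ n := by
    have := hu.sub (hv.mul_left 2)
    simpa only [hd0] using this
  have hsub : ∑' n, t n / β ^ n - 2 * ∑' n, t n ^ 2 / (2 * β ^ n)
      = ∑' n, t n * (1 - t n) / β ^ n := by
    rw [← tsum_mul_left, ← hu.tsum_sub (hv.mul_left 2)]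
    simp only [hd0]
  have hlow : N * (η / 6) ≤ ∑' n, t n * (1 - t n) / β ^ n := by
    refine le_trans ?_ (hsd.sum_le_tsum (Finset.range (N + 1)) (fun n _ => hdn n))
    rw [Finset.sum_range_succ']
    have : ∑ i ∈ Finset.range N, η / 6 ≤
        ∑ i ∈ Finset.range N, t (i + 1) * (1 - t (i + 1)) / β ^ (i + 1) := by
      refine Finset.sum_le_sum fun i hi => ?_
      obtain ⟨e, l⟩ := hsm i (Finset.mem_range.mp hi).le
      rw [e]
      have p : 0 < β ^ i := by positivity
      rw [le_div_iff₀ (by positivity), pow_succ]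
      have q : 0 < β ^ i * η := by positivity
      nlinarith
    simp only [Finset.sum_const, Finset.card_range, nsmul_eq_mul] at this
    linarith [hdn 0]
  rw [← hsub] at hlow
  generalize ∑' n, t n / β ^ n = D at *
  generalize ∑' n, t n ^ 2 / (2 * β ^ n) = S at *
  have hS1 : S ≤ 1 := by
    have : 0 ≤ N * (η / 6) := by positivity
    linarith
  have h2 : D - 2 * S ≤ 1 / (S / D) - 2 := by
    rw [one_div_div, le_sub_iff_add_le, le_div_iff₀ (by linarith)]
    have : 0 ≤ D - 2 * S := le_trans (by positivity) hlow
    nlinarith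
  have h3 : η < ε * (N * (η / 6)) := by
    rw [div_lt_iff₀ hε] at hN
    nlinarith
  have h4 := mul_le_mul_of_nonneg_left (hlow.trans h2) hε.le
  linarith
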